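/- Let P_{12}, P_{13}, P_{23} be three equimarginal two-variable probability distributions on three binary variables (viewed as functions of (x,y,z) ∈ {0,1}^3 constant in the absent variable), with common one-variable marginals P_1, P_2, P_3. Define Δ = 1 − P_1 − P_2 − P_3 + P_{12} + P_{13} + P_{23}. Then P_{12}, P_{13}, P_{23} are the two-variable marginals of a single probability distribution P on {0,1}^3 if and only if 0 ≤ Δ(x,y,z) ≤ 1 for all x,y,z ∈ {0,1}. -/

import Mathlib

/-!
If `P` has the prescribed marginals then, by inclusion–exclusion, `Δ(v) = P(v) + P(¬v)`, where `¬v`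
is the vertex antipodal to `v`; this gives necessity. Conversely, a signed `Q` with these marginals
always exists, and adding `t` on the odd vertices and subtracting it on the even ones preserves the
marginals. Taking for `t` the least value of `Q` on the even vertices, the result is nonnegative as
soon as `Q(u) + Q(v) ≥ 0` for `u` even and `v` odd. Two such vertices differ in exactly one
coordinate, where the sum is a two-variable marginal, or in all three, where it is `Δ(u)`.
-/

open Finset

theorem sum_bool_eq_add_not {M : Type*} [AddCommMonoid M] (f : Bool → M) (b : Bool) :
    ∑ i, f i = f b + f (!b) := by
  cases b <;> simp [add_comm]

/-- An equimarginal triple of two-variable distributions on `α × β × γ`, with values in `M`, of any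
sign and total mass. The one-variable marginals `p₁`, `p₂`, `p₃` are part of the data, and each
function takes only the variables it depends on. -/
structure PairMarginals (α β γ M : Type*) [Fintype α] [Fintype β] [Fintype γ]
    [AddCommMonoid M] where
  p₁₂ : α → β → M
  p₁₃ : α → γ → M
  p₂₃ : β → γ → M
  p₁ : α → M
  p₂ : β → M
  p₃ : γ → M
  mass : M
  sum_p₁₂_right : ∀ x, ∑ y, p₁₂ x y = p₁ x
  sum_p₁₂_left : ∀ y, ∑ x, p₁₂ x y = p₂ y
  sum_p₁₃_right : ∀ x, ∑ z, p₁₃ x z = p₁ x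
  sum_p₁₃_left : ∀ z, ∑ x, p₁₃ x z = p₃ z
  sum_p₂₃_right : ∀ y, ∑ z, p₂₃ y z = p₂ y
  sum_p₂₃_left : ∀ z, ∑ y, p₂₃ y z = p₃ z
  sum_p₁ : ∑ x, p₁ x = mass

namespace PairMarginals

section FiniteTypes

variable {α β γ M : Type*} [Fintype α] [Fintype β] [Fintype γ]

/-- `P` is a joint, possibly signed, distribution whose two-variable marginals are those of `F`. -/
structure HasMarginals [AddCommMonoid M] (F : PairMarginals α β γ M) (P : α → β → γ → M) :
    Prop where
  sum_third : ∀ x y, ∑ z, P x y z = F.p₁₂ x y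
  sum_second : ∀ x z, ∑ y, P x y z = F.p₁₃ x z
  sum_first : ∀ y z, ∑ x, P x y z = F.p₂₃ y z

section AddCommMonoid

variable [AddCommMonoid M] (F : PairMarginals α β γ M)

theorem sum_p₂ : ∑ y, F.p₂ y = F.mass := by
  simp only [← F.sum_p₁, ← F.sum_p₁₂_left, ← F.sum_p₁₂_right]
  exact sum_comm

theorem sum_p₃ : ∑ z, F.p₃ z = F.mass := by
  simp only [← F.sum_p₁, ← F.sum_p₁₃_left, ← F.sum_p₁₃_right]
  exact sum_comm

variable {F} in
theorem HasMarginals.sum_eq_mass {P : α → β → γ → M} (hP : F.HasMarginals P) :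
    ∑ x, ∑ y, ∑ z, P x y z = F.mass := by
  simp only [hP.sum_third, F.sum_p₁₂_right, F.sum_p₁]

end AddCommMonoid

section AddCommGroup

variable [AddCommGroup M] (F : PairMarginals α β γ M)

/-- The signed joint distribution obtained by inclusion–exclusion from `F` and from weights
`u`, `v`, `w` of total mass one that fill in the absent variables. The weights are integers so that
they act on any abelian group. -/
def signedJoint (u : α → ℤ) (v : β → ℤ) (w : γ → ℤ) (x : α) (y : β) (z : γ) : M :=
  w z • F.p₁₂ x y + v y • F.p₁₃ x z + u x • F.p₂₃ y z
    - (v y * w z) • F.p₁ x - (u x * w z) • F.p₂ y - (u x * v y) • F.p₃ z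
    + (u x * v y * w z) • F.mass

theorem hasMarginals_signedJoint {u : α → ℤ} {v : β → ℤ} {w : γ → ℤ}
    (hu : ∑ x, u x = 1) (hv : ∑ y, v y = 1) (hw : ∑ z, w z = 1) :
    F.HasMarginals (F.signedJoint u v w) where
  sum_third x y := by
    simp only [signedJoint, sum_add_distrib, sum_sub_distrib, ← mul_sum, ← smul_sum,
      ← sum_smul, hw, F.sum_p₁₃_right, F.sum_p₂₃_right, F.sum_p₃]
    module
  sum_second x z := by
    simp only [signedJoint, sum_add_distrib, sum_sub_distrib, ← mul_sum, ← sum_mul,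
      ← smul_sum, ← sum_smul, hv, F.sum_p₁₂_right, F.sum_p₂₃_left, F.sum_p₂]
    module
  sum_first y z := by
    simp only [signedJoint, sum_add_distrib, sum_sub_distrib, ← sum_mul, ← smul_sum,
      ← sum_smul, hu, F.sum_p₁₂_left, F.sum_p₁₃_left, F.sum_p₁]
    module

theorem exists_hasMarginals [Nonempty α] [Nonempty β] [Nonempty γ] :
    ∃ Q, F.HasMarginals Q := by
  classical
  inhabit α; inhabit β; inhabit γ
  exact ⟨_, F.hasMarginals_signedJoint (u := Pi.single default 1) (v := Pi.single default 1)
    (w := Pi.single default 1) (by simp) (by simp) (by simp)⟩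

end AddCommGroup

end FiniteTypes

section Binary

theorem hasMarginals_bool_iff {M : Type*} [AddCommMonoid M] {F : PairMarginals Bool Bool Bool M}
    {P : Bool → Bool → Bool → M} :
    F.HasMarginals P ↔ (∀ x y, P x y false + P x y true = F.p₁₂ x y) ∧
      (∀ x z, P x false z + P x true z = F.p₁₃ x z) ∧
      (∀ y z, P false y z + P true y z = F.p₂₃ y z) := by
  have hsum : F.HasMarginals P ↔ (∀ x y, ∑ z, P x y z = F.p₁₂ x y) ∧
      (∀ x z, ∑ y, P x y z = F.p₁₃ x z) ∧ (∀ y z, ∑ x, P x y z = F.p₂₃ y z) :=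
    ⟨fun ⟨h₁₂, h₁₃, h₂₃⟩ => ⟨h₁₂, h₁₃, h₂₃⟩, fun ⟨h₁₂, h₁₃, h₂₃⟩ => ⟨h₁₂, h₁₃, h₂₃⟩⟩
  simpa only [Fintype.sum_bool, add_comm] using hsum

section AddCommGroup

variable {M : Type*} [AddCommGroup M] (F : PairMarginals Bool Bool Bool M)

/-- The function `Δ` of the Wigner–Pitowsky criterion, with the total mass in place of `1`. -/
def discrepancy (x y z : Bool) : M :=
  F.mass - F.p₁ x - F.p₂ y - F.p₃ z + F.p₁₂ x y + F.p₁₃ x z + F.p₂₃ y z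

variable {F} {P : Bool → Bool → Bool → M}

theorem HasMarginals.add_antipode_eq_discrepancy (hP : F.HasMarginals P) (x y z : Bool) :
    P x y z + P (!x) (!y) (!z) = F.discrepancy x y z := by
  simp only [discrepancy, ← hP.sum_eq_mass, ← F.sum_p₁₂_right, ← F.sum_p₁₂_left, ← F.sum_p₁₃_left,
    ← hP.sum_third, ← hP.sum_second, ← hP.sum_first, Fintype.sum_bool]
  cases x <;> cases y <;> cases z <;> simp only [Bool.not_true, Bool.not_false] <;> abel

theorem HasMarginals.add_parity (hP : F.HasMarginals P) (t : M) :
    F.HasMarginals fun x y z => P x y z + bif x ^^ y ^^ z then t else -t where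
  sum_third x y := by
    rw [sum_add_distrib, hP.sum_third]
    cases x <;> cases y <;> simp
  sum_second x z := by
    rw [sum_add_distrib, hP.sum_second]
    cases x <;> cases z <;> simp
  sum_first y z := by
    rw [sum_add_distrib, hP.sum_first]
    cases y <;> cases z <;> simp

variable (F) in
theorem discrepancy_add_adjacent (x y z : Bool) :
    F.discrepancy x y z + F.discrepancy (!x) y z + F.discrepancy x (!y) z
      + F.discrepancy x y (!z) = F.mass := by
  obtain ⟨Q, hQ⟩ := F.exists_hasMarginals
  simp only [← hQ.add_antipode_eq_discrepancy, ← hQ.sum_eq_mass, Fintype.sum_bool]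
  cases x <;> cases y <;> cases z <;> simp only [Bool.not_true, Bool.not_false] <;> abel

end AddCommGroup

section Preorder

variable {M : Type*} [AddCommGroup M] [Preorder M] {F : PairMarginals Bool Bool Bool M}

theorem HasMarginals.add_nonneg_of_parity_ne {Q : Bool → Bool → Bool → M}
    (hQ : F.HasMarginals Q) (h₁₂ : ∀ x y, 0 ≤ F.p₁₂ x y) (h₁₃ : ∀ x z, 0 ≤ F.p₁₃ x z)
    (h₂₃ : ∀ y z, 0 ≤ F.p₂₃ y z) (hΔ : ∀ x y z, 0 ≤ F.discrepancy x y z)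
    {x y z x' y' z' : Bool} (hne : (x' ^^ y' ^^ z') ≠ (x ^^ y ^^ z)) :
    0 ≤ Q x y z + Q x' y' z' := by
  obtain ⟨rfl, rfl, rfl⟩ | ⟨rfl, rfl, rfl⟩ | ⟨rfl, rfl, rfl⟩ | ⟨rfl, rfl, rfl⟩ :
      (x' = x ∧ y' = y ∧ z' = !z) ∨ (x' = x ∧ y' = (!y) ∧ z' = z) ∨
        (x' = (!x) ∧ y' = y ∧ z' = z) ∨ (x' = (!x) ∧ y' = (!y) ∧ z' = !z) := by
    revert x y z x' y' z'
    decide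
  · rw [← sum_bool_eq_add_not (Q x' y') z, hQ.sum_third]
    exact h₁₂ x' y'
  · rw [← sum_bool_eq_add_not (fun y => Q x' y z') y, hQ.sum_second]
    exact h₁₃ x' z'
  · rw [← sum_bool_eq_add_not (fun x => Q x y' z') x, hQ.sum_first]
    exact h₂₃ y' z'
  · rw [hQ.add_antipode_eq_discrepancy]
    exact hΔ x y z

theorem discrepancy_le_mass [IsOrderedAddMonoid M] (hΔ : ∀ x y z, 0 ≤ F.discrepancy x y z)
    (x y z : Bool) : F.discrepancy x y z ≤ F.mass := by
  rw [← F.discrepancy_add_adjacent x y z, add_assoc, add_assoc]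
  exact le_add_of_nonneg_right (add_nonneg (hΔ _ _ _) (add_nonneg (hΔ _ _ _) (hΔ _ _ _)))

end Preorder

theorem exists_nonneg_hasMarginals {M : Type*} [AddCommGroup M] [LinearOrder M]
    [IsOrderedAddMonoid M] {F : PairMarginals Bool Bool Bool M}
    (h₁₂ : ∀ x y, 0 ≤ F.p₁₂ x y) (h₁₃ : ∀ x z, 0 ≤ F.p₁₃ x z)
    (h₂₃ : ∀ y z, 0 ≤ F.p₂₃ y z) (hΔ : ∀ x y z, 0 ≤ F.discrepancy x y z) :
    ∃ P, (∀ x y z, 0 ≤ P x y z) ∧ F.HasMarginals P := by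
  obtain ⟨Q, hQ⟩ := F.exists_hasMarginals
  -- The even vertices are the triples `(x, y, x ^^ y)`.
  obtain ⟨⟨x₀, y₀⟩, hmin⟩ := Finite.exists_min fun v : Bool × Bool => Q v.1 v.2 (v.1 ^^ v.2)
  refine ⟨_, fun x y z => ?_, hQ.add_parity (Q x₀ y₀ (x₀ ^^ y₀))⟩
  cases hxyz : x ^^ y ^^ z with
  | false =>
    obtain rfl : (x ^^ y) = z := by rw [← bne_eq_false_iff_eq]; exact hxyz
    simpa using hmin (x, y)
  | true =>
    rw [cond_true, add_comm]
    exact hQ.add_nonneg_of_parity_ne h₁₂ h₁₃ h₂₃ hΔ (by simp [hxyz])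

end Binary

end PairMarginals

theorem stmt_0_general {M : Type*} [AddCommGroup M] [LinearOrder M] [IsOrderedAddMonoid M]
    (F : PairMarginals Bool Bool Bool M) (h₁₂ : ∀ x y, 0 ≤ F.p₁₂ x y)
    (h₁₃ : ∀ x z, 0 ≤ F.p₁₃ x z) (h₂₃ : ∀ y z, 0 ≤ F.p₂₃ y z) :
    (∃ P, (∀ x y z, 0 ≤ P x y z) ∧ F.HasMarginals P) ↔ ∀ x y z, 0 ≤ F.discrepancy x y z := by
  refine ⟨?_, PairMarginals.exists_nonneg_hasMarginals h₁₂ h₁₃ h₂₃⟩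
  rintro ⟨P, hnonneg, hP⟩ x y z
  rw [← hP.add_antipode_eq_discrepancy]
  exact add_nonneg (hnonneg _ _ _) (hnonneg _ _ _)

/-- Theorem 1 of the paper, Wigner–Pitowsky.
Three equimarginal two-variable probability distributions `P12, P13, P23` on three
binary variables (viewed as functions on `Bool × Bool × Bool` constant in the absent
variable), with common one-variable marginals `P1, P2, P3`, are the two-variable
marginals of a single probability distribution `P` on `{0,1}³` if and only if
`0 ≤ Δ(x,y,z) ≤ 1` for all `x,y,z`, where
`Δ = 1 - P1 - P2 - P3 + P12 + P13 + P23`. -/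
theorem stmt_0
    (P12 P13 P23 P1 P2 P3 : Bool → Bool → Bool → ℝ)
    -- P12 is a probability distribution on variables {1,2}
    (h12nn : ∀ x y z, 0 ≤ P12 x y z)
    (h12const : ∀ x y z z', P12 x y z = P12 x y z')
    (h12sum : ∀ z, ∑ x : Bool, ∑ y : Bool, P12 x y z = 1)
    -- P13 is a probability distribution on variables {1,3}
    (h13nn : ∀ x y z, 0 ≤ P13 x y z)
    (h13const : ∀ x y y' z, P13 x y z = P13 x y' z)
    (h13sum : ∀ y, ∑ x : Bool, ∑ z : Bool, P13 x y z = 1)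
    -- P23 is a probability distribution on variables {2,3}
    (h23nn : ∀ x y z, 0 ≤ P23 x y z)
    (h23const : ∀ x x' y z, P23 x y z = P23 x' y z)
    (h23sum : ∀ x, ∑ y : Bool, ∑ z : Bool, P23 x y z = 1)
    -- the common one-variable marginals are constant in the absent variables
    (hP1const : ∀ x y z y' z', P1 x y z = P1 x y' z')
    (hP2const : ∀ x y z x' z', P2 x y z = P2 x' y z')
    (hP3const : ∀ x y z x' y', P3 x y z = P3 x' y' z)
    -- equimarginality
    (hP1a : ∀ x y z, P12 x y z + P12 x (!y) z = P1 x y z)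
    (hP1b : ∀ x y z, P13 x y z + P13 x y (!z) = P1 x y z)
    (hP2a : ∀ x y z, P12 x y z + P12 (!x) y z = P2 x y z)
    (hP2b : ∀ x y z, P23 x y z + P23 x y (!z) = P2 x y z)
    (hP3a : ∀ x y z, P13 x y z + P13 (!x) y z = P3 x y z)
    (hP3b : ∀ x y z, P23 x y z + P23 x (!y) z = P3 x y z) :
    (∃ P : Bool → Bool → Bool → ℝ,
        (∀ x y z, 0 ≤ P x y z) ∧
        (∑ x : Bool, ∑ y : Bool, ∑ z : Bool, P x y z) = 1 ∧
        (∀ x y z, P x y false + P x y true = P12 x y z) ∧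
        (∀ x y z, P x false z + P x true z = P13 x y z) ∧
        (∀ x y z, P false y z + P true y z = P23 x y z)) ↔
      (∀ x y z,
        0 ≤ 1 - P1 x y z - P2 x y z - P3 x y z + P12 x y z + P13 x y z + P23 x y z ∧
        1 - P1 x y z - P2 x y z - P3 x y z + P12 x y z + P13 x y z + P23 x y z ≤ 1) := by
  let F : PairMarginals Bool Bool Bool ℝ :=
    { p₁₂ := (P12 · · false), p₁₃ := (P13 · false ·), p₂₃ := (P23 false · ·)
      p₁ := (P1 · false false), p₂ := (P2 false · false), p₃ := (P3 false false ·), mass := 1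
      sum_p₁₂_right := fun x => (sum_bool_eq_add_not _ _).trans (hP1a x false false)
      sum_p₁₂_left := fun y => (sum_bool_eq_add_not _ _).trans (hP2a false y false)
      sum_p₁₃_right := fun x => (sum_bool_eq_add_not _ _).trans (hP1b x false false)
      sum_p₁₃_left := fun z => (sum_bool_eq_add_not _ _).trans (hP3a false false z)
      sum_p₂₃_right := fun y => (sum_bool_eq_add_not _ _).trans (hP2b false y false)
      sum_p₂₃_left := fun z => (sum_bool_eq_add_not _ _).trans (hP3b false false z)
      sum_p₁ := by
        simpa only [← hP1a _ false false, sum_bool_eq_add_not _ false] using h12sum false }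
  have h12 : ∀ x y z, P12 x y z = F.p₁₂ x y := fun x y z => h12const x y z false
  have h13 : ∀ x y z, P13 x y z = F.p₁₃ x z := fun x y z => h13const x y false z
  have h23 : ∀ x y z, P23 x y z = F.p₂₃ y z := fun x y z => h23const x false y z
  have h1 : ∀ x y z, P1 x y z = F.p₁ x := fun x y z => hP1const x y z false false
  have h2 : ∀ x y z, P2 x y z = F.p₂ y := fun x y z => hP2const x y z false false
  have h3 : ∀ x y z, P3 x y z = F.p₃ z := fun x y z => hP3const x y z false false
  simp only [h12, h13, h23, h1, h2, h3, forall_const, ← PairMarginals.hasMarginals_bool_iff]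
  have criterion := stmt_0_general F (h12nn · · false) (h13nn · false ·) (h23nn false · ·)
  exact ⟨fun ⟨P, hnonneg, _, hP⟩ x y z =>
      have hΔ := criterion.1 ⟨P, hnonneg, hP⟩
      ⟨hΔ x y z, PairMarginals.discrepancy_le_mass hΔ x y z⟩,
    fun hΔ => let ⟨P, hnonneg, hP⟩ := criterion.2 fun x y z => (hΔ x y z).1
      ⟨P, hnonneg, hP.sum_eq_mass, hP⟩⟩
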